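/- Let ψ be a Ma-Minda function with ψ(𝔻) a convex set, let 0 < q < 1, and let H(z) = z/((1 − qz)(1 − z)). Suppose r ∈ (0, 1] is such that the function z ↦ H(rz)/r belongs to S*(ψ). If f is a convex function (f ∈ C), then the function G(z) = z·d_q f(z) = (f(z) − f(qz))/(1 − q) satisfies: z ↦ G(rz)/r belongs to S*(ψ); that is, z·d_q f(z) ∈ S*(ψ) on |z| < r. -/

import Mathlib

open Complex Metric Set

noncomputable section

/-- The open unit disk in `ℂ`. -/
def 𝔻 : Set ℂ := Metric.ball 0 1

/-- The class `𝒜` of analytic functions on `𝔻` normalized by `f 0 = 0`, `f' 0 = 1`. -/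
def IsClassA (f : ℂ → ℂ) : Prop :=
  DifferentiableOn ℂ f 𝔻 ∧ f 0 = 0 ∧ deriv f 0 = 1

/-- `g` is subordinate to `F` on the unit disk. -/
def Subordinate (g F : ℂ → ℂ) : Prop :=
  ∃ ω : ℂ → ℂ, DifferentiableOn ℂ ω 𝔻 ∧ ω 0 = 0 ∧ (∀ z ∈ 𝔻, ω z ∈ 𝔻) ∧
    ∀ z ∈ 𝔻, g z = F (ω z)

/-- `ψ` is a Ma-Minda function: analytic and univalent on `𝔻`, `Re ψ > 0`, `ψ 0 = 1`,
`ψ' 0 > 0`, with real Taylor coefficients (expressed via `ψ (conj z) = conj (ψ z)`). -/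
def MaMinda (ψ : ℂ → ℂ) : Prop :=
  DifferentiableOn ℂ ψ 𝔻 ∧ Set.InjOn ψ 𝔻 ∧ (∀ z ∈ 𝔻, 0 < (ψ z).re) ∧
    ψ 0 = 1 ∧ 0 < (deriv ψ 0).re ∧ (deriv ψ 0).im = 0 ∧
    (∀ z ∈ 𝔻, ψ (starRingEnd ℂ z) = starRingEnd ℂ (ψ z))

/-- The Ma-Minda starlike class `S*(ψ)`. -/
def StarlikeMM (ψ f : ℂ → ℂ) : Prop :=
  IsClassA f ∧ (∀ z ∈ 𝔻, z ≠ 0 → f z ≠ 0) ∧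
    Subordinate (fun z => if z = 0 then 1 else z * deriv f z / f z) ψ

/-- The Ma-Minda convex class `C(ψ)`. -/
def ConvexMM (ψ f : ℂ → ℂ) : Prop :=
  IsClassA f ∧ (∀ z ∈ 𝔻, deriv f z ≠ 0) ∧
    Subordinate (fun z => 1 + z * deriv (deriv f) z / deriv f z) ψ

/-- `f` is starlike of order `α`. -/
def StarlikeOrder (α : ℝ) (f : ℂ → ℂ) : Prop :=
  IsClassA f ∧ (∀ z ∈ 𝔻, z ≠ 0 → f z ≠ 0) ∧
    ∀ z ∈ 𝔻, z ≠ 0 → α < (z * deriv f z / f z).re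

/-- `f` is a (normalized) convex function on `𝔻`. -/
def IsConvexFn (f : ℂ → ℂ) : Prop :=
  IsClassA f ∧ (∀ z ∈ 𝔻, deriv f z ≠ 0) ∧
    ∀ z ∈ 𝔻, 0 < (1 + z * deriv (deriv f) z / deriv f z).re

/-! Let `c` be on a circle `|z| = ρ < 1`. For a convex map `f`, the direction of the chord from `f c`
to `f z` increases as `z` runs along the circle, while `c / (c - z)` moves along the line
`re = 1 / 2`; this gives `re ≥ 1 / 2` for `1 + c (f[c, a] - f[c, b]) / (f a - f b)` when `a` and `b`
lie on the circle, where `f[c, a]` is the difference quotient, and the maximum principle in `a` and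
then in `b` extends the bound to the closed disk.

Fix now `a = r z` and `b = q r z`. The same expression is a holomorphic function `p` of `c` with
`p 0 = 1`, and `2 re p - 1 ≥ 0` is its Herglotz density on the circle. Evaluated at `a` and `b`, the
Herglotz formula exhibits `p a + p b - 1 = z G'(z) / G(z)`, for the rescaled `G`, as a mean of
`c / (c - a) + c / (c - b) - 1` over the circle. These are values of `w H'(w) / H(w)` for the
rescaled `H` at `w = z / c`, so they lie in the open convex set `ψ(𝔻)`, and hence so does the mean.
Univalence of `ψ` turns membership in `ψ(𝔻)` into subordination. -/

lemma mem_𝔻 {z : ℂ} : z ∈ 𝔻 ↔ ‖z‖ < 1 := mem_ball_zero_iff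

lemma isOpen_𝔻 : IsOpen 𝔻 := isOpen_ball

lemma closedBall_subset_𝔻 {ρ : ℝ} (hρ : ρ < 1) : closedBall 0 ρ ⊆ 𝔻 := closedBall_subset_ball hρ

lemma dslope_comm {𝕜 E : Type*} [NontriviallyNormedField 𝕜] [NormedAddCommGroup E]
    [NormedSpace 𝕜 E] (f : 𝕜 → E) (a b : 𝕜) : dslope f a b = dslope f b a := by
  rcases eq_or_ne a b with rfl | hab
  · rfl
  · rw [dslope_of_ne f hab.symm, dslope_of_ne f hab, slope_comm]

lemma exists_exp_eq_of_ne_zero {g : ℂ → ℂ} {c : ℂ} {R : ℝ} (hg : DifferentiableOn ℂ g (ball c R))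
    (hne : ∀ z ∈ ball c R, g z ≠ 0) :
    ∃ L : ℂ → ℂ, ∀ z ∈ ball c R, HasDerivAt L (deriv g z / g z) z ∧ exp (L z) = g z := by
  rcases le_or_gt R 0 with hR | hR
  · exact ⟨0, by simp [ball_eq_empty.2 hR]⟩
  have hc : c ∈ ball c R := mem_ball_self hR
  obtain ⟨L, hLc, hL⟩ :=
    ((hg.deriv isOpen_ball).div hg hne).isExactOn_ball.with_val_at c (log (g c))
  have hquot : ∀ z ∈ ball c R, HasDerivAt (fun z => g z * exp (-L z)) 0 z := fun z hz => by
    have hgz := (hg.differentiableAt (isOpen_ball.mem_nhds hz)).hasDerivAt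
    refine (hgz.mul (hL z hz).neg.cexp).congr_deriv ?_
    have := hne z hz
    simp only [Pi.div_apply]
    field_simp
    ring
  refine ⟨L, fun z hz => ⟨hL z hz, ?_⟩⟩
  have hconst : g z * exp (-L z) = g c * exp (-L c) :=
    isOpen_ball.is_const_of_deriv_eq_zero (convex_ball c R).isPreconnected
      (fun w hw => (hquot w hw).differentiableAt.differentiableWithinAt)
      (fun w hw => (hquot w hw).deriv) hz hc
  rw [hLc, exp_neg, exp_neg, exp_log (hne c hc), mul_inv_cancel₀ (hne c hc)] at hconst
  exact (eq_of_div_eq_one (by rwa [div_eq_mul_inv])).symm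

section MaximumPrinciple

variable {g : ℂ → ℂ} {c : ℂ} {R m : ℝ}

lemma sphere_subset_closure_sphere_diff {s : Set ℂ} (hR : 0 < R) (hs : s.Finite) :
    sphere c R ⊆ closure (sphere c R \ s) := fun x hx => by
  have hnontrivial : (sphere c R).Nontrivial := by
    refine ⟨c + R, by simp [hR.le], c - R, by simp [hR.le], fun h => hR.ne' ?_⟩
    have hRR : (R : ℂ) = -R := add_left_cancel (h.trans (sub_eq_add_neg c _))
    exact_mod_cast self_eq_neg.1 hRR
  have hacc : AccPt x (Filter.principal (sphere c R)) :=
    (isPreconnected_sphere (by simp [rank_real_complex]) c R).preperfect_of_nontrivial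
      hnontrivial x hx
  have havoid : ∀ᶠ y in nhds x, y ∉ s \ {x} :=
    hs.sdiff.isClosed.isOpen_compl.mem_nhds fun h => h.2 rfl
  exact mem_closure_iff_frequently.2 <|
    ((accPt_iff_frequently.1 hacc).and_eventually havoid).mono
      fun y ⟨⟨hyx, hy⟩, hys⟩ => ⟨hy, fun h => hys ⟨h, hyx⟩⟩

lemma le_re_of_forall_mem_sphere_diff {s : Set ℂ} (hR : 0 < R) (hs : s.Finite)
    (hg : DiffContOnCl ℂ g (ball c R)) (hm : ∀ z ∈ sphere c R \ s, m ≤ (g z).re) {z : ℂ}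
    (hz : z ∈ closedBall c R) : m ≤ (g z).re := by
  have hcont : ContinuousOn g (sphere c R) := hg.continuousOn_ball.mono sphere_subset_closedBall
  have hsphere : ∀ w ∈ sphere c R, m ≤ (g w).re := fun w hw =>
    le_on_closure hm continuousOn_const
      ((continuous_re.comp_continuousOn hcont).mono
        (closure_minimal sdiff_subset isClosed_sphere)) (sphere_subset_closure_sphere_diff hR hs hw)
  have hexp : ‖exp (-g z)‖ ≤ Real.exp (-m) := by
    refine norm_le_of_forall_mem_frontier_norm_le (f := fun w => exp (-g w)) isBounded_ball
      (differentiable_exp.comp_diffContOnCl hg.neg) (fun w hw => ?_)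
      (by rwa [closure_ball c hR.ne'])
    rw [frontier_ball c hR.ne'] at hw
    simpa [norm_exp] using hsphere w hw
  simpa [norm_exp] using hexp

lemma lt_re_of_forall_mem_sphere_diff {s : Set ℂ} (hR : 0 < R) (hs : s.Finite)
    (hg : DiffContOnCl ℂ g (ball c R)) (hm : ∀ z ∈ sphere c R \ s, m < (g z).re) {z : ℂ}
    (hz : z ∈ ball c R) : m < (g z).re := by
  have hle : ∀ w ∈ closedBall c R, m ≤ (g w).re := fun w hw =>
    le_re_of_forall_mem_sphere_diff hR hs hg (fun v hv => (hm v hv).le) hw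
  refine (hle z (ball_subset_closedBall hz)).lt_of_ne fun heq => ?_
  have hmax : IsMaxOn (norm ∘ fun w => exp (-g w)) (ball c R) z := fun w hw => by
    simpa [norm_exp, ← heq] using hle w (ball_subset_closedBall hw)
  have hconst := norm_eqOn_closure_of_isPreconnected_of_isMaxOn (convex_ball c R).isPreconnected
    isOpen_ball (differentiable_exp.comp_diffContOnCl hg.neg) hz hmax
  obtain ⟨w, hw⟩ : (sphere c R \ s).Nonempty := by
    have hne : (sphere c R).Nonempty := NormedSpace.sphere_nonempty.2 hR.le
    exact closure_nonempty_iff.1 (hne.mono (sphere_subset_closure_sphere_diff hR hs))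
  have hgw : (g w).re = m := by
    have hwcl : w ∈ closure (ball c R) := by
      rw [closure_ball c hR.ne']
      exact sphere_subset_closedBall hw.1
    simpa [norm_exp, ← heq] using hconst hwcl
  exact (hm w hw).ne' hgw

end MaximumPrinciple

section Circle

lemma exists_eq_mul_exp_of_norm_eq {a c : ℂ} (hn : ‖c‖ = ‖a‖) (hne : c ≠ a) :
    ∃ θ ∈ Ioo 0 (2 * Real.pi), c = a * exp (θ * I) := by
  have ha : a ≠ 0 := by
    rintro rfl
    exact hne (norm_eq_zero.1 (hn.trans norm_zero))
  have hmem : c / a ∈ circleMap 0 1 '' Ioc 0 (2 * Real.pi) := by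
    rw [image_circleMap_Ioc]
    simp [hn, ha]
  obtain ⟨θ, ⟨hθ0, hθ⟩, heq⟩ := hmem
  have hc : c = a * exp (θ * I) := by
    rw [← div_mul_cancel₀ c ha, ← heq, circleMap_zero, ofReal_one, one_mul, mul_comm]
  refine ⟨θ, ⟨hθ0, hθ.lt_of_ne ?_⟩, hc⟩
  rintro rfl
  exact hne (by simpa using hc)

lemma mul_exp_mul_I_mem_𝔻 {a : ℂ} (ha : a ∈ 𝔻) (t : ℝ) : a * exp (t * I) ∈ 𝔻 := by
  rw [mem_𝔻] at ha ⊢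
  rwa [norm_mul, norm_exp_ofReal_mul_I, mul_one]

lemma mul_exp_mul_I_ne {a : ℂ} (ha : a ≠ 0) {θ : ℝ} (hθ : θ ∈ Ioo 0 (2 * Real.pi)) :
    a * exp (θ * I) ≠ a := by
  rw [Ne, mul_eq_left₀ ha, exp_eq_one_iff]
  rintro ⟨n, hn⟩
  have hθn : θ = n * (2 * Real.pi) := by
    have : (θ : ℂ) = n * (2 * Real.pi) := mul_right_cancel₀ I_ne_zero (by rw [hn]; ring)
    exact_mod_cast this
  have hn0 : (0 : ℝ) < n := by nlinarith [hθ.1, Real.pi_pos]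
  have hn1 : (n : ℝ) < 1 := by nlinarith [hθ.2, Real.pi_pos]
  norm_cast at hn0 hn1
  omega

lemma hasDerivAt_mul_exp_mul_I (a : ℂ) (t : ℝ) :
    HasDerivAt (fun t : ℝ => a * exp (t * I)) (a * exp (t * I) * I) t := by
  refine ((((hasDerivAt_id (t : ℂ)).mul_const I).cexp).const_mul a).comp_ofReal.congr_deriv ?_
  simp only [id, one_mul, mul_assoc]

lemma pos_of_hasDerivAt_mul_sin {h α ρ : ℝ → ℝ} {T θ : ℝ} (hα : StrictMono α) (hα0 : α 0 = 0)
    (hαT : α T = 2 * Real.pi) (hρ : ∀ t, 0 < ρ t)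
    (hh : ∀ t, HasDerivAt h (ρ t * Real.sin (α t)) t) (h0 : h 0 = 0) (hT : h T = 0)
    (hθ : θ ∈ Ioo 0 T) : 0 < h θ := by
  have hcont : Continuous h := continuous_iff_continuousAt.2 fun t => (hh t).continuousAt
  rcases le_or_gt (α θ) Real.pi with hle | hgt
  · have hmono : StrictMonoOn h (Icc 0 θ) := by
      refine strictMonoOn_of_deriv_pos (convex_Icc _ _) hcont.continuousOn fun t ht => ?_
      rw [interior_Icc] at ht
      rw [(hh t).deriv]
      exact mul_pos (hρ t)
        (Real.sin_pos_of_pos_of_lt_pi (hα0 ▸ hα ht.1) ((hα ht.2).trans_le hle))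
    exact h0 ▸ hmono (left_mem_Icc.2 hθ.1.le) (right_mem_Icc.2 hθ.1.le) hθ.1
  · have hanti : StrictAntiOn h (Icc θ T) := by
      refine strictAntiOn_of_deriv_neg (convex_Icc _ _) hcont.continuousOn fun t ht => ?_
      rw [interior_Icc] at ht
      rw [(hh t).deriv]
      have hsin : 0 < Real.sin (α t - Real.pi) := Real.sin_pos_of_pos_of_lt_pi
        (by linarith [hα ht.1]) (by linarith [hα ht.2])
      rw [Real.sin_sub_pi] at hsin
      exact mul_neg_of_pos_of_neg (hρ t) (neg_pos.1 hsin)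
    exact hT ▸ hanti (left_mem_Icc.2 hθ.2.le) (right_mem_Icc.2 hθ.2.le) hθ.2

end Circle

/-- A convex map of the unit disk: the class `C` without the normalization at the origin. -/
structure IsConvexMap (f : ℂ → ℂ) : Prop where
  differentiableOn : DifferentiableOn ℂ f 𝔻
  deriv_ne_zero : ∀ z ∈ 𝔻, deriv f z ≠ 0
  re_pos : ∀ z ∈ 𝔻, 0 < (1 + z * deriv (deriv f) z / deriv f z).re

namespace IsConvexMap

variable {f : ℂ → ℂ} {a b c : ℂ}

lemma hasDerivAt (hf : IsConvexMap f) {z : ℂ} (hz : z ∈ 𝔻) : HasDerivAt f (deriv f z) z :=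
  (hf.differentiableOn.differentiableAt (isOpen_𝔻.mem_nhds hz)).hasDerivAt

lemma re_support_circle_pos (hf : IsConvexMap f) (ha : a ∈ 𝔻) (hc : ‖c‖ = ‖a‖) (hca : c ≠ a) :
    0 < ((f a - f c) / (a * deriv f a)).re := by
  obtain ⟨θ, hθ, rfl⟩ := exists_eq_mul_exp_of_norm_eq hc hca
  have ha0 : a ≠ 0 := by
    rintro rfl
    simp at hca
  have hmem := mul_exp_mul_I_mem_𝔻 ha
  obtain ⟨L, hL⟩ := exists_exp_eq_of_ne_zero (hf.differentiableOn.deriv isOpen_𝔻) hf.deriv_ne_zero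
  -- `α` is the direction of the tangent to the image curve, measured from the tangent at `f a`.
  set α : ℝ → ℝ := fun t => t + (L (a * exp (t * I)) - L a).im with hα
  have hα_deriv (t : ℝ) : HasDerivAt α (1 + a * exp (t * I) *
      deriv (deriv f) (a * exp (t * I)) / deriv f (a * exp (t * I))).re t := by
    have hcomp := ((hL _ (hmem t)).1.comp t (hasDerivAt_mul_exp_mul_I a t)).sub_const (L a)
    refine ((hasDerivAt_id t).add (imCLM.hasFDerivAt.comp_hasDerivAt t hcomp)).congr_deriv ?_
    rw [imCLM_apply, ← mul_assoc, mul_I_im, add_re, one_re, div_mul_eq_mul_div,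
      mul_comm (deriv _ _)]
  refine pos_of_hasDerivAt_mul_sin (α := α) (ρ := fun t => Real.exp (L (a * exp (t * I)) - L a).re)
    (h := fun t => ((f a - f (a * exp (t * I))) / (a * deriv f a)).re) (T := 2 * Real.pi)
    (strictMono_of_deriv_pos fun t => ?_) (by simp [hα]) (by simp [hα]) (fun t => Real.exp_pos _)
    (fun t => ?_) (by simp) (by simp) hθ
  · rw [(hα_deriv t).deriv]
    exact hf.re_pos _ (hmem t)
  · have hcomp := (((hf.hasDerivAt (hmem t)).comp t (hasDerivAt_mul_exp_mul_I a t)).const_sub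
      (f a)).div_const (a * deriv f a)
    refine (reCLM.hasFDerivAt.comp_hasDerivAt t hcomp).congr_deriv ?_
    have htangent : -(deriv f (a * exp (t * I)) * (a * exp (t * I) * I)) / (a * deriv f a) =
        -(exp (L (a * exp (t * I)) - L a + t * I) * I) := by
      rw [exp_add, exp_sub, (hL _ (hmem t)).2, (hL _ ha).2]
      field_simp
    rw [reCLM_apply, htangent, neg_re, mul_I_re, neg_neg, exp_im]
    simp [hα, add_comm]

lemma re_support_pos (hf : IsConvexMap f) (ha : a ∈ 𝔻) (hc : ‖c‖ ≤ ‖a‖) (hca : c ≠ a) :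
    0 < ((f a - f c) / (a * deriv f a)).re := by
  rcases hc.eq_or_lt with heq | hlt
  · exact hf.re_support_circle_pos ha heq hca
  have hball : closure (ball 0 ‖a‖) ⊆ 𝔻 :=
    closure_ball_subset_closedBall.trans (closedBall_subset_𝔻 (mem_𝔻.1 ha))
  refine lt_re_of_forall_mem_sphere_diff (g := fun z => (f a - f z) / (a * deriv f a))
    ((norm_nonneg c).trans_lt hlt) (finite_singleton a)
    (((hf.differentiableOn.mono hball).const_sub _).div_const _).diffContOnCl
    (fun z hz => hf.re_support_circle_pos ha (mem_sphere_zero_iff_norm.1 hz.1) hz.2)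
    (mem_ball_zero_iff.2 hlt)

lemma injOn (hf : IsConvexMap f) : InjOn f 𝔻 := fun a ha c hc hac => by
  wlog hle : ‖c‖ ≤ ‖a‖ generalizing a c
  · exact (this c hc a ha hac.symm (le_of_not_ge hle)).symm
  by_contra hne
  simpa [hac] using hf.re_support_pos ha hle (Ne.symm hne)

end IsConvexMap

section ThreePoint

lemma strictAntiOn_cot : StrictAntiOn Real.cot (Ioo 0 Real.pi) := fun x hx y hy hxy => by
  have hsx := Real.sin_pos_of_mem_Ioo hx
  have hsy := Real.sin_pos_of_mem_Ioo hy
  have hsin : 0 < Real.sin (y - x) :=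
    Real.sin_pos_of_pos_of_lt_pi (sub_pos.2 hxy) (by linarith [hx.1, hy.2])
  rw [Real.cot_eq_cos_div_sin, Real.cot_eq_cos_div_sin, div_lt_div_iff₀ hsy hsx]
  rw [Real.sin_sub] at hsin
  linarith

lemma inv_one_sub_exp_mul_I {θ : ℝ} (hθ : Real.sin (θ / 2) ≠ 0) :
    (1 - exp (θ * I))⁻¹ = 1 / 2 + I / 2 * Real.cot (θ / 2) := by
  have hsin : sin (θ / 2 : ℂ) ≠ 0 := by exact_mod_cast hθ
  have hexp : exp (θ * I) = (cos (θ / 2) + sin (θ / 2) * I) ^ 2 := by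
    rw [← exp_mul_I, ← exp_nat_mul]
    push_cast
    ring_nf
  refine (eq_inv_of_mul_eq_one_left ?_).symm
  rw [hexp, Real.cot_eq_cos_div_sin]
  push_cast
  field_simp
  linear_combination
    (sin (θ / 2 : ℂ) - I * cos (θ / 2 : ℂ)) * sin_sq_add_cos_sq (θ / 2 : ℂ) -
      sin (θ / 2 : ℂ) * (2 * cos (θ / 2 : ℂ) ^ 2 + sin (θ / 2 : ℂ) * cos (θ / 2 : ℂ) * I +
        sin (θ / 2 : ℂ) ^ 2) * I_sq

lemma hasDerivAt_arg_comp {w : ℝ → ℂ} {w' : ℂ} {t : ℝ} (hw : HasDerivAt w w' t)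
    (ht : w t ∈ slitPlane) : HasDerivAt (fun t => arg (w t)) (w' / w t).im t := by
  simp only [← log_im]
  exact imCLM.hasFDerivAt.comp_hasDerivAt t (hw.clog_real ht)

lemma im_mul_conj_pos {z w : ℂ} (hz : 0 < z.re) (hw : 0 < w.re) (h : arg z < arg w) :
    0 < (w * starRingEnd ℂ z).im := by
  have hz' := abs_lt.1 (abs_arg_lt_pi_div_two_iff.2 (Or.inl hz))
  have hw' := abs_lt.1 (abs_arg_lt_pi_div_two_iff.2 (Or.inl hw))
  have hsin : 0 < Real.sin (arg w - arg z) :=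
    Real.sin_pos_of_pos_of_lt_pi (sub_pos.2 h) (by linarith)
  have hprod : (w * starRingEnd ℂ z).im = ‖w‖ * ‖z‖ * Real.sin (arg w - arg z) := by
    rw [mul_im, conj_re, conj_im, Real.sin_sub, ← norm_mul_cos_arg z, ← norm_mul_sin_arg z,
      ← norm_mul_cos_arg w, ← norm_mul_sin_arg w]
    ring
  rw [hprod]
  have := norm_pos_iff.2 (ne_zero_of_re_pos hz)
  have := norm_pos_iff.2 (ne_zero_of_re_pos hw)
  positivity

lemma im_mul_sub_mul_div_sub (z w : ℂ) (k l : ℝ) :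
    ((k * z - l * w) / (z - w)).im = (k - l) * (w * starRingEnd ℂ z).im / normSq (z - w) := by
  rw [div_im, ← sub_div]
  congr 1
  simp
  ring

end ThreePoint

/-- The ratio of the convolutions of `f` with `z / ((1 - a z) (1 - b z) (1 - c z))` and
`z / ((1 - a z) (1 - b z))`, evaluated at `1` and written with divided differences, so that
coincident points are allowed. Convex maps make its real part at least `1 / 2`. -/
def convexKernel (f : ℂ → ℂ) (c b a : ℂ) : ℂ :=
  1 + c * (dslope (dslope f c) b a / dslope f b a)

lemma convexKernel_of_ne {f : ℂ → ℂ} {a b : ℂ} (c : ℂ) (hab : a ≠ b) :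
    convexKernel f c b a = 1 + c * (dslope f c a - dslope f c b) / (f a - f b) := by
  rw [convexKernel, dslope_of_ne _ hab, dslope_of_ne _ hab, slope_def_field, slope_def_field,
    div_div_div_cancel_right₀ (sub_ne_zero.2 hab), mul_div_assoc]

lemma convexKernel_comm (f : ℂ → ℂ) (c b a : ℂ) : convexKernel f c b a = convexKernel f c a b := by
  rcases eq_or_ne a b with rfl | hab
  · rfl
  · rw [convexKernel_of_ne c hab, convexKernel_of_ne c hab.symm, ← neg_sub (dslope f c b),
      ← neg_sub (f b), mul_neg, neg_div_neg_eq]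

lemma mul_dslope_mul_exp_mul_I (f : ℂ → ℂ) {c : ℂ} (hc : c ≠ 0) {θ : ℝ}
    (hθ : θ ∈ Ioo 0 (2 * Real.pi)) :
    c * dslope f c (c * exp (θ * I)) =
      (f c - f (c * exp (θ * I))) * (1 / 2 + I / 2 * Real.cot (θ / 2)) := by
  have hne := mul_exp_mul_I_ne hc hθ
  have hsub : c * exp (θ * I) - c = -(c * (1 - exp (θ * I))) := by ring
  have hsin : Real.sin (θ / 2) ≠ 0 :=
    (Real.sin_pos_of_pos_of_lt_pi (by linarith [hθ.1]) (by linarith [hθ.2])).ne'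
  rw [← inv_one_sub_exp_mul_I hsin, dslope_of_ne _ hne, slope_def_field, hsub, ← neg_sub (f c),
    neg_div_neg_eq, ← mul_div_assoc, mul_div_mul_left _ _ hc, div_eq_mul_inv]

lemma re_convexKernel_mul_exp_mul_I {f : ℂ → ℂ} {c d : ℂ} (hc : c ≠ 0) (hd : d ≠ 0) {s t : ℝ}
    (hs : s ∈ Ioo 0 (2 * Real.pi)) (ht : t ∈ Ioo 0 (2 * Real.pi))
    (hst : f (c * exp (s * I)) ≠ f (c * exp (t * I))) {z w : ℂ}
    (hz : f c - f (c * exp (s * I)) = d * z) (hw : f c - f (c * exp (t * I)) = d * w) :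
    (convexKernel f c (c * exp (t * I)) (c * exp (s * I))).re = 1 / 2 +
      (Real.cot (s / 2) - Real.cot (t / 2)) * (w * starRingEnd ℂ z).im / normSq (z - w) / 2 := by
  have hzw : f (c * exp (s * I)) - f (c * exp (t * I)) = -(d * (z - w)) := by
    linear_combination hw - hz
  have hzw0 : z - w ≠ 0 := by
    intro h
    rw [h, mul_zero, neg_zero, sub_eq_zero] at hzw
    exact hst hzw
  have hkernel : convexKernel f c (c * exp (t * I)) (c * exp (s * I)) =
      1 / 2 + -((Real.cot (s / 2) * z - Real.cot (t / 2) * w) / (z - w) * I) / (2 : ℝ) := by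
    rw [convexKernel_of_ne _ fun h => hst (congrArg f h), mul_sub, mul_dslope_mul_exp_mul_I f hc hs,
      mul_dslope_mul_exp_mul_I f hc ht, hz, hw, hzw]
    push_cast
    field_simp
    ring
  rw [hkernel, add_re, div_ofReal_re, neg_re, mul_I_re, neg_neg, im_mul_sub_mul_div_sub]
  norm_num

namespace IsConvexMap

variable {f : ℂ → ℂ} {a b c : ℂ} {ρ : ℝ}

lemma strictMonoOn_arg_chord (hf : IsConvexMap f) (hc : c ∈ 𝔻) (hc0 : c ≠ 0) :
    StrictMonoOn (fun θ : ℝ => arg ((f c - f (c * exp (θ * I))) / (c * deriv f c)))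
      (Ioo 0 (2 * Real.pi)) := by
  have hmem := mul_exp_mul_I_mem_𝔻 hc
  have hnorm (θ : ℝ) : ‖c * exp (θ * I)‖ = ‖c‖ := by rw [norm_mul, norm_exp_ofReal_mul_I, mul_one]
  have hderiv : ∀ θ ∈ Ioo 0 (2 * Real.pi), ∃ v > 0,
      HasDerivAt (fun θ : ℝ => arg ((f c - f (c * exp (θ * I))) / (c * deriv f c))) v θ := by
    intro θ hθ
    set z := c * exp (θ * I) with hz
    have hzc : z ≠ c := mul_exp_mul_I_ne hc0 hθ
    have hchord : 0 < ((f c - f z) / (c * deriv f c)).re :=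
      hf.re_support_circle_pos hc (hnorm θ) hzc
    have hinv : 0 < ((f z - f c) / (z * deriv f z))⁻¹.re := by
      rw [inv_re]
      have := hf.re_support_circle_pos (hmem θ) (hnorm θ).symm hzc.symm
      exact div_pos this (normSq_pos.2 (ne_zero_of_re_pos this))
    refine ⟨_, hinv, ?_⟩
    have hcomp := ((((hf.hasDerivAt (hmem θ)).comp θ (hasDerivAt_mul_exp_mul_I c θ)).const_sub
      (f c)).div_const (c * deriv f c))
    refine (hasDerivAt_arg_comp hcomp (Or.inl hchord)).congr_deriv ?_
    have hfz : f c - f z ≠ 0 := sub_ne_zero.2 fun h => hzc (hf.injOn (hmem θ) hc h.symm)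
    have hc' := hf.deriv_ne_zero c hc
    rw [← mul_I_im, inv_div, ← neg_sub (f c)]
    simp only [Function.comp_apply, ← hz]
    congr 1
    field_simp
  choose! v hv hd using hderiv
  refine strictMonoOn_of_deriv_pos (convex_Ioo _ _)
    (fun θ hθ => (hd θ hθ).continuousAt.continuousWithinAt) fun θ hθ => ?_
  rw [interior_Ioo] at hθ
  rw [(hd θ hθ).deriv]
  exact hv θ hθ

lemma half_le_re_convexKernel_circle (hf : IsConvexMap f) (hc : c ∈ 𝔻) (ha : ‖a‖ = ‖c‖)
    (hb : ‖b‖ = ‖c‖) (hac : a ≠ c) (hbc : b ≠ c) (hab : a ≠ b) :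
    1 / 2 ≤ (convexKernel f c b a).re := by
  have hc0 : c ≠ 0 := by
    rintro rfl
    exact hac (norm_eq_zero.1 (ha.trans norm_zero))
  obtain ⟨s, hs, rfl⟩ := exists_eq_mul_exp_of_norm_eq ha hac
  obtain ⟨t, ht, rfl⟩ := exists_eq_mul_exp_of_norm_eq hb hbc
  wlog hst : s < t generalizing s t
  · rw [convexKernel_comm]
    refine this t ht hb hbc s hs ha hac hab.symm ((not_lt.1 hst).lt_of_ne ?_)
    rintro rfl
    exact hab rfl
  have hd : c * deriv f c ≠ 0 := mul_ne_zero hc0 (hf.deriv_ne_zero c hc)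
  have hmem := mul_exp_mul_I_mem_𝔻 hc
  have hcot : Real.cot (t / 2) < Real.cot (s / 2) :=
    strictAntiOn_cot ⟨by linarith [hs.1], by linarith [hs.2]⟩
      ⟨by linarith [ht.1], by linarith [ht.2]⟩ (by linarith)
  have hangle := im_mul_conj_pos (hf.re_support_circle_pos hc ha hac)
    (hf.re_support_circle_pos hc hb hbc) (hf.strictMonoOn_arg_chord hc hc0 hs ht hst)
  rw [re_convexKernel_mul_exp_mul_I hc0 hd hs ht (fun h => hab (hf.injOn (hmem s) (hmem t) h))
    (mul_div_cancel₀ _ hd).symm (mul_div_cancel₀ _ hd).symm]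
  exact le_add_of_nonneg_right (div_nonneg (div_nonneg
    (mul_nonneg (sub_pos.2 hcot).le hangle.le) (normSq_nonneg _)) zero_le_two)

lemma dslope_ne_zero (hf : IsConvexMap f) (ha : a ∈ 𝔻) (hb : b ∈ 𝔻) : dslope f b a ≠ 0 := by
  rcases eq_or_ne a b with rfl | hab
  · rw [dslope_same]
    exact hf.deriv_ne_zero a ha
  · rw [dslope_of_ne _ hab, slope_def_field]
    exact div_ne_zero (sub_ne_zero.2 fun h => hab (hf.injOn ha hb h)) (sub_ne_zero.2 hab)

lemma differentiableOn_convexKernel (hf : IsConvexMap f) (hb : b ∈ 𝔻) (hc : c ∈ 𝔻) :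
    DifferentiableOn ℂ (convexKernel f c b) 𝔻 := by
  have hdb := (differentiableOn_dslope (isOpen_𝔻.mem_nhds hb)).2 hf.differentiableOn
  have hdc := (differentiableOn_dslope (isOpen_𝔻.mem_nhds hc)).2 hf.differentiableOn
  have hdcb := (differentiableOn_dslope (isOpen_𝔻.mem_nhds hb)).2 hdc
  exact ((hdcb.div hdb fun a ha => hf.dslope_ne_zero ha hb).const_mul c).const_add 1

lemma half_le_re_convexKernel_of_sphere_diff (hf : IsConvexMap f) (hρ : 0 < ρ) (hρ1 : ρ < 1)
    {s : Set ℂ} (hs : s.Finite) (hb : b ∈ 𝔻) (hc : c ∈ 𝔻)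
    (hm : ∀ z ∈ sphere 0 ρ \ s, 1 / 2 ≤ (convexKernel f c b z).re) (ha : a ∈ closedBall 0 ρ) :
    1 / 2 ≤ (convexKernel f c b a).re := by
  have hsub : closure (ball 0 ρ) ⊆ 𝔻 := by
    rw [closure_ball _ hρ.ne']
    exact closedBall_subset_𝔻 hρ1
  exact le_re_of_forall_mem_sphere_diff hρ hs
    ((hf.differentiableOn_convexKernel hb hc).mono hsub).diffContOnCl hm ha

lemma half_le_re_convexKernel (hf : IsConvexMap f) (hρ1 : ρ < 1)
    (ha : a ∈ closedBall 0 ρ) (hb : b ∈ closedBall 0 ρ) (hc : c ∈ sphere 0 ρ) :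
    1 / 2 ≤ (convexKernel f c b a).re := by
  rcases (norm_nonneg c).eq_or_lt' with hc0 | hρ
  · norm_num [convexKernel, norm_eq_zero.1 hc0]
  rw [mem_sphere_zero_iff_norm.1 hc] at hρ
  have hsub := closedBall_subset_𝔻 hρ1
  have hcD := hsub (sphere_subset_closedBall hc)
  have hnorm {z : ℂ} (hz : z ∈ sphere 0 ρ) : ‖z‖ = ‖c‖ :=
    (mem_sphere_zero_iff_norm.1 hz).trans (mem_sphere_zero_iff_norm.1 hc).symm
  have hsphere : ∀ y ∈ sphere 0 ρ \ {c}, 1 / 2 ≤ (convexKernel f c a y).re := fun y hy => by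
    rw [convexKernel_comm]
    refine hf.half_le_re_convexKernel_of_sphere_diff hρ hρ1 (toFinite {y, c})
      (hsub (sphere_subset_closedBall hy.1)) hcD (fun x hx => ?_) ha
    obtain ⟨hxy, hxc⟩ : x ≠ y ∧ x ≠ c := by simpa using hx.2
    exact hf.half_le_re_convexKernel_circle hcD (hnorm hx.1) (hnorm hy.1) hxc hy.2 hxy
  rw [convexKernel_comm]
  exact hf.half_le_re_convexKernel_of_sphere_diff hρ hρ1 (finite_singleton c) (hsub ha) hcD
    hsphere hb

end IsConvexMap

section CircleAverage

open Real

variable {E : Type*} [NormedAddCommGroup E] [NormedSpace ℝ E] [CompleteSpace E]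
  {S : Set E} {w : ℂ → ℝ} {k : ℂ → E} {c : ℂ} {R : ℝ}

lemma circleAverage_smul_mem_of_isOpen_convex (hSo : IsOpen S) (hSc : Convex ℝ S) (hR : 0 ≤ R)
    (hw : ContinuousOn w (sphere c R)) (hw0 : ∀ s ∈ sphere c R, 0 ≤ w s)
    (hw1 : circleAverage w c R = 1) (hk : ContinuousOn k (sphere c R))
    (hkS : ∀ s ∈ sphere c R, k s ∈ S) : circleAverage (w • k) c R ∈ S := by
  by_contra hv
  obtain ⟨l, hl⟩ := geometric_hahn_banach_open_point hSc hSo hv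
  have hlk : ContinuousOn (fun s => l (k s)) (sphere c R) := l.continuous.comp_continuousOn hk
  obtain ⟨s₀, hs₀, hmax⟩ := (isCompact_sphere c R).exists_isMaxOn
    (NormedSpace.sphere_nonempty.2 hR) hlk
  have hlv : l (circleAverage (w • k) c R) = circleAverage (fun s => w s * l (k s)) c R := by
    rw [← l.circleAverage_comp_comm ((hw.smul hk).circleIntegrable hR)]
    simp only [Function.comp_def, Pi.smul_apply', map_smul, smul_eq_mul]
  have hmean : circleAverage (fun s => l (k s₀) * w s) c R = l (k s₀) := by
    simpa only [smul_eq_mul, hw1, mul_one]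
      using circleAverage_fun_smul (a := l (k s₀)) (f := w) (c := c) (R := R)
  have hle : circleAverage (fun s => w s * l (k s)) c R ≤ l (k s₀) := by
    rw [← hmean]
    refine circleAverage_mono ((hw.mul hlk).circleIntegrable hR)
      ((continuousOn_const.mul hw).circleIntegrable hR) fun s hs => ?_
    rw [abs_of_nonneg hR] at hs
    rw [mul_comm]
    exact mul_le_mul_of_nonneg_right (hmax hs) (hw0 s hs)
  exact (hl _ (hkS s₀ hs₀)).not_ge (hlv.trans_le hle)

end CircleAverage

section Herglotz

open Real ComplexConjugate

variable {p : ℂ → ℂ} {a b x : ℂ} {R : ℝ}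

lemma sub_ne_zero_of_mem_sphere_of_mem_ball {s : ℂ} (hs : s ∈ sphere 0 R) (hx : x ∈ ball 0 R) :
    s - x ≠ 0 :=
  sub_ne_zero.2 (sphere_disjoint_ball.ne_of_mem hs hx)

lemma continuousOn_div_sub (hx : x ∈ ball 0 R) :
    ContinuousOn (fun s => s / (s - x)) (sphere 0 R) :=
  continuousOn_id.div (continuousOn_id.sub continuousOn_const) fun _ hs =>
    sub_ne_zero_of_mem_sphere_of_mem_ball hs hx

lemma circleAverage_conj_div_sub_mul (hR : 0 < R) (hp : DiffContOnCl ℂ p (ball 0 R))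
    (hx : x ∈ ball 0 R) : circleAverage (fun s => conj (s / (s - x)) * p s) 0 R = p 0 := by
  have hne : ∀ s ∈ closure (ball 0 R), (R : ℂ) ^ 2 - conj x * s ≠ 0 := fun s hs h => by
    rw [closure_ball _ hR.ne', mem_closedBall_zero_iff] at hs
    rw [mem_ball_zero_iff] at hx
    have hnorm := congrArg norm (sub_eq_zero.1 h)
    rw [norm_pow, norm_real, norm_mul, norm_conj, Real.norm_of_nonneg hR.le] at hnorm
    nlinarith [norm_nonneg x]
  -- On the circle the conjugated kernel agrees with a function holomorphic in the disk.
  have hkernel : ∀ s ∈ sphere 0 |R|, conj (s / (s - x)) * p s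
      = (R ^ 2 * ((R : ℂ) ^ 2 - conj x * s)⁻¹) * p s := fun s hs => by
    rw [abs_of_pos hR] at hs
    have hsR : s * conj s = (R : ℂ) ^ 2 := by
      rw [mul_conj', mem_sphere_zero_iff_norm.1 hs]
    have hs0 : s - 0 ≠ 0 := sub_ne_zero_of_mem_sphere_of_mem_ball hs (mem_ball_self hR)
    rw [sub_zero] at hs0
    rw [map_div₀, map_sub, ← hsR, ← div_eq_mul_inv, mul_comm (conj x), ← mul_sub,
      mul_div_mul_left _ _ hs0]
  have hg : DiffContOnCl ℂ (fun s => (R ^ 2 * ((R : ℂ) ^ 2 - conj x * s)⁻¹) * p s)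
      (ball 0 |R|) := by
    rw [abs_of_pos hR]
    exact (((((differentiable_id.const_mul (conj x)).const_sub _).diffContOnCl).inv hne).const_smul
      ((R : ℂ) ^ 2)).smul hp
  rw [circleAverage_congr_sphere hkernel, hg.circleAverage]
  have hR' : (R : ℂ) ≠ 0 := ofReal_ne_zero.2 hR.ne'
  simp [hR']

lemma circleAverage_conj_div_sub_mul_conj (hR : 0 < R) (hp : DiffContOnCl ℂ p (ball 0 R))
    (hx : x ∈ ball 0 R) :
    circleAverage (fun s => s / (s - x) * conj (p s)) 0 R = conj (p 0) := by
  have hpc : ContinuousOn p (sphere 0 R) := hp.continuousOn_ball.mono sphere_subset_closedBall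
  have hci : CircleIntegrable (fun s => conj (s / (s - x)) * p s) 0 R :=
    ((continuous_conj.comp_continuousOn (continuousOn_div_sub hx)).mul hpc).circleIntegrable hR.le
  have h := conjCLE.toContinuousLinearMap.circleAverage_comp_comm hci
  rw [circleAverage_conj_div_sub_mul hR hp hx] at h
  simpa [Function.comp_def] using h

lemma circleAverage_two_mul_re_sub_one_smul_div_sub (hR : 0 < R)
    (hp : DiffContOnCl ℂ p (ball 0 R)) (hp0 : p 0 = 1) (hx : x ∈ ball 0 R) :
    circleAverage (fun s => (2 * (p s).re - 1) • (s / (s - x))) 0 R = p x := by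
  have hpc : ContinuousOn p (sphere 0 R) := hp.continuousOn_ball.mono sphere_subset_closedBall
  have hk := continuousOn_div_sub hx
  have hcauchy {g : ℂ → ℂ} (hg : DiffContOnCl ℂ g (ball 0 R)) :
      circleAverage (fun s => s / (s - x) * g s) 0 R = g x := by
    rw [← abs_of_pos hR] at hg hx
    simpa only [sub_zero, smul_eq_mul] using hg.circleAverage_smul_div hx
  have hsplit : (fun s => (2 * (p s).re - 1) • (s / (s - x)))
      = fun s => s / (s - x) * (p s - 1) + s / (s - x) * conj (p s) := by
    ext s
    have hre : ((2 * (p s).re - 1 : ℝ) : ℂ) = p s + conj (p s) - 1 := by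
      rw [add_conj]
      push_cast
      rfl
    rw [real_smul, hre]
    ring
  have hci₁ : CircleIntegrable (fun s => s / (s - x) * (p s - 1)) 0 R :=
    (hk.mul (hpc.sub continuousOn_const)).circleIntegrable hR.le
  have hci₂ : CircleIntegrable (fun s => s / (s - x) * conj (p s)) 0 R :=
    (hk.mul (continuous_conj.comp_continuousOn hpc)).circleIntegrable hR.le
  rw [hsplit, circleAverage_fun_add hci₁ hci₂, hcauchy (hp.sub_const 1),
    circleAverage_conj_div_sub_mul_conj hR hp hx, hp0, map_one, sub_add_cancel]

lemma circleAverage_two_mul_re_sub_one (hR : 0 < R) (hp : DiffContOnCl ℂ p (ball 0 R))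
    (hp0 : p 0 = 1) : circleAverage (fun s => 2 * (p s).re - 1) 0 R = 1 := by
  have hpc : ContinuousOn p (sphere 0 R) := hp.continuousOn_ball.mono sphere_subset_closedBall
  have hmean : circleAverage (fun s => (p s).re) 0 R = 1 := by
    rw [← one_re, ← hp0, ← DiffContOnCl.circleAverage (f := p) (R := R) (by rwa [abs_of_pos hR])]
    exact reCLM.circleAverage_comp_comm (hpc.circleIntegrable hR.le)
  have hrec : ContinuousOn (fun s => 2 * (p s).re) (sphere 0 R) :=
    continuousOn_const.mul (continuous_re.comp_continuousOn hpc)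
  rw [circleAverage_fun_sub (hrec.circleIntegrable hR.le) (circleIntegrable_const _ _ _),
    circleAverage_const]
  have h2 := circleAverage_fun_smul (a := (2 : ℝ)) (f := fun s => (p s).re) (c := 0) (R := R)
  simp only [smul_eq_mul, hmean] at h2
  rw [h2]
  norm_num

lemma add_sub_one_mem_of_isOpen_convex {S : Set ℂ} (hSo : IsOpen S) (hSc : Convex ℝ S)
    (hR : 0 < R) (hp : DiffContOnCl ℂ p (ball 0 R)) (hp0 : p 0 = 1)
    (hre : ∀ s ∈ sphere 0 R, 1 / 2 ≤ (p s).re) (ha : a ∈ ball 0 R) (hb : b ∈ ball 0 R)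
    (hS : ∀ s ∈ sphere 0 R, s / (s - a) + s / (s - b) - 1 ∈ S) : p a + p b - 1 ∈ S := by
  let w : ℂ → ℝ := fun s => 2 * (p s).re - 1
  let k : ℂ → ℂ → ℂ := fun x s => s / (s - x)
  have hw : ContinuousOn w (sphere 0 R) :=
    (continuousOn_const.mul (continuous_re.comp_continuousOn
      (hp.continuousOn_ball.mono sphere_subset_closedBall))).sub continuousOn_const
  have hw0 : ∀ s ∈ sphere 0 R, 0 ≤ w s := fun s hs => by linarith [hre s hs]
  have h0 : (0 : ℂ) ∈ ball 0 R := mem_ball_self hR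
  have hkS : ∀ s ∈ sphere 0 R, (k a + k b - k 0) s ∈ S := fun s hs => by
    have hk0 : k 0 s = 1 := by
      simpa only [k, sub_zero] using
        div_self (sub_ne_zero_of_mem_sphere_of_mem_ball hs h0)
    simpa only [Pi.sub_apply, Pi.add_apply, hk0] using hS s hs
  have hk {x : ℂ} (hx : x ∈ ball 0 R) : ContinuousOn (k x) (sphere 0 R) := continuousOn_div_sub hx
  have hci {x : ℂ} (hx : x ∈ ball 0 R) : CircleIntegrable (w • k x) 0 R :=
    (hw.smul (hk hx)).circleIntegrable hR.le
  have havg {x : ℂ} (hx : x ∈ ball 0 R) : circleAverage (w • k x) 0 R = p x :=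
    circleAverage_two_mul_re_sub_one_smul_div_sub hR hp hp0 hx
  have hmem := circleAverage_smul_mem_of_isOpen_convex hSo hSc hR.le hw hw0
    (circleAverage_two_mul_re_sub_one hR hp hp0) (((hk ha).add (hk hb)).sub (hk h0)) hkS
  rwa [smul_sub, smul_add, circleAverage_sub ((hci ha).add (hci hb)) (hci h0),
    circleAverage_add (hci ha) (hci hb), havg ha, havg hb, havg h0, hp0] at hmem

end Herglotz

lemma IsConvexMap.mul_deriv_sub_mul_deriv_div_sub_mem {f : ℂ → ℂ} (hf : IsConvexMap f) {S : Set ℂ}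
    (hSo : IsOpen S) (hSc : Convex ℝ S) {R : ℝ} (hR1 : R < 1) {a b : ℂ} (ha : a ∈ ball 0 R)
    (hb : b ∈ ball 0 R) (hab : a ≠ b)
    (hS : ∀ c ∈ sphere 0 R, c / (c - a) + c / (c - b) - 1 ∈ S) :
    (a * deriv f a - b * deriv f b) / (f a - f b) ∈ S := by
  have hR : 0 < R := pos_of_mem_ball ha
  have hsub := closedBall_subset_𝔻 hR1
  have haD := hsub (ball_subset_closedBall ha)
  have hbD := hsub (ball_subset_closedBall hb)
  -- As a function of `c`, the kernel `convexKernel f c b a` is holomorphic in the whole disk.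
  let p : ℂ → ℂ := fun c => 1 + c * (dslope f a c - dslope f b c) / (f a - f b)
  have hp : DiffContOnCl ℂ p (ball 0 R) := by
    have hda := (differentiableOn_dslope (isOpen_𝔻.mem_nhds haD)).2 hf.differentiableOn
    have hdb := (differentiableOn_dslope (isOpen_𝔻.mem_nhds hbD)).2 hf.differentiableOn
    exact (((differentiableOn_id.mul (hda.sub hdb)).div_const _).const_add 1).diffContOnCl_ball hsub
  have hp0 : p 0 = 1 := by simp only [p, zero_mul, zero_div, add_zero]
  have hre : ∀ c ∈ sphere 0 R, 1 / 2 ≤ (p c).re := fun c hc => by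
    have h := hf.half_le_re_convexKernel hR1 (ball_subset_closedBall ha)
      (ball_subset_closedBall hb) hc
    rwa [convexKernel_of_ne c hab, dslope_comm f c a, dslope_comm f c b] at h
  have hpab : p a + p b - 1 = (a * deriv f a - b * deriv f b) / (f a - f b) := by
    have hne : f a - f b ≠ 0 := sub_ne_zero.2 fun h => hab (hf.injOn haD hbD h)
    have hslope : (a - b) * dslope f a b = f a - f b := by
      rw [dslope_comm, ← smul_eq_mul, sub_smul_dslope]
    simp only [p, dslope_same, dslope_comm f b a]
    field_simp
    linear_combination -hslope
  rw [← hpab]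
  exact add_sub_one_mem_of_isOpen_convex hSo hSc hR hp hp0 hre ha hb hS

section Univalent

open Filter Topology

variable {f g : ℂ → ℂ} {U : Set ℂ}

lemma not_eventually_eq_const_of_injOn (hU : IsOpen U) (hf : InjOn f U) {z : ℂ} (hz : z ∈ U) :
    ¬∀ᶠ w in 𝓝 z, f w = f z := fun h => by
  obtain ⟨w, ⟨hw, hwU⟩, hwz⟩ := (((h.and (hU.mem_nhds hz)).filter_mono nhdsWithin_le_nhds).and
    (self_mem_nhdsWithin (s := {z}ᶜ))).exists
  exact hwz (hf hwU hz hw)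

lemma nhds_le_map_nhds_of_injOn (hU : IsOpen U) (hd : DifferentiableOn ℂ f U) (hf : InjOn f U)
    {z : ℂ} (hz : z ∈ U) : 𝓝 (f z) ≤ map f (𝓝 z) :=
  (hd.analyticAt (hU.mem_nhds hz)).eventually_constant_or_nhds_le_map_nhds.resolve_left
    (not_eventually_eq_const_of_injOn hU hf hz)

lemma isOpen_image_of_injOn (hU : IsOpen U) (hd : DifferentiableOn ℂ f U) (hf : InjOn f U) :
    IsOpen (f '' U) := by
  refine isOpen_iff_mem_nhds.2 ?_
  rintro _ ⟨z, hz, rfl⟩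
  exact nhds_le_map_nhds_of_injOn hU hd hf hz (image_mem_map (hU.mem_nhds hz))

lemma eventually_deriv_ne_zero_of_injOn (hU : IsOpen U) (hd : DifferentiableOn ℂ f U)
    (hf : InjOn f U) {z : ℂ} (hz : z ∈ U) : ∀ᶠ w in 𝓝[≠] z, deriv f w ≠ 0 := by
  have hderiv := (hd.analyticAt (hU.mem_nhds hz)).deriv
  refine hderiv.eventually_eq_zero_or_eventually_ne_zero.resolve_left fun h =>
    not_eventually_eq_const_of_injOn hU hf hz ?_
  obtain ⟨ε, hε, hball⟩ := Metric.eventually_nhds_iff_ball.1 (h.and (hU.mem_nhds hz))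
  filter_upwards [ball_mem_nhds z hε] with w hw
  exact isOpen_ball.is_const_of_deriv_eq_zero (convex_ball z ε).isPreconnected
    (hd.mono fun y hy => (hball y hy).2) (fun y hy => (hball y hy).1) hw (mem_ball_self hε)

lemma continuousAt_leftInvOn (hU : IsOpen U) (hd : DifferentiableOn ℂ f U) (hf : InjOn f U)
    (hg : LeftInvOn g f U) {z : ℂ} (hz : z ∈ U) : ContinuousAt g (f z) := by
  rw [ContinuousAt, hg hz]
  have hgf : map (g ∘ f) (𝓝 z) = 𝓝 z := by
    rw [map_congr (eventually_of_mem (hU.mem_nhds hz) hg : g ∘ f =ᶠ[𝓝 z] id), map_id]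
  calc map g (𝓝 (f z)) ≤ map g (map f (𝓝 z)) := map_mono (nhds_le_map_nhds_of_injOn hU hd hf hz)
    _ = 𝓝 z := by rw [map_map, hgf]

lemma differentiableOn_leftInvOn (hU : IsOpen U) (hd : DifferentiableOn ℂ f U) (hf : InjOn f U)
    (hg : LeftInvOn g f U) : DifferentiableOn ℂ g (f '' U) := by
  have hopen := isOpen_image_of_injOn hU hd hf
  have hregular : ∀ z ∈ U, deriv f z ≠ 0 → DifferentiableAt ℂ g (f z) := fun z hz hne => by
    have hfz := hd.hasDerivAt (hU.mem_nhds hz)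
    rw [← hg hz] at hfz hne
    have hcont := continuousAt_leftInvOn hU hd hf hg hz
    refine (hfz.of_local_left_inverse hcont hne ?_).differentiableAt
    filter_upwards [hopen.mem_nhds (mem_image_of_mem f hz)] with y hy
    exact hg.rightInvOn_image hy
  rintro _ ⟨z, hz, rfl⟩
  have hcont := continuousAt_leftInvOn hU hd hf hg hz
  refine (analyticAt_of_differentiable_on_punctured_nhds_of_continuousAt ?_
    hcont).differentiableAt.differentiableWithinAt
  have hne : ∀ᶠ w in 𝓝 (g (f z)), w ≠ z → deriv f w ≠ 0 := by
    rw [hg hz]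
    exact eventually_nhdsWithin_iff.1 (eventually_deriv_ne_zero_of_injOn hU hd hf hz)
  rw [eventually_nhdsWithin_iff]
  filter_upwards [hcont.eventually hne, hopen.mem_nhds (mem_image_of_mem f hz)]
  rintro _ hy ⟨w, hw, rfl⟩ hwz
  rw [hg hw] at hy
  exact hregular w hw (hy fun h => hwz (congrArg f h))

end Univalent

lemma subordinate_of_mapsTo_image {k ψ : ℂ → ℂ} (hψd : DifferentiableOn ℂ ψ 𝔻) (hψi : InjOn ψ 𝔻)
    (hk : DifferentiableOn ℂ k 𝔻) (hk0 : k 0 = ψ 0) (hmaps : MapsTo k 𝔻 (ψ '' 𝔻)) :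
    Subordinate k ψ := by
  have hg : LeftInvOn (Function.invFunOn ψ 𝔻) ψ 𝔻 := hψi.leftInvOn_invFunOn
  refine ⟨Function.invFunOn ψ 𝔻 ∘ k,
    (differentiableOn_leftInvOn isOpen_𝔻 hψd hψi hg).comp hk hmaps, ?_,
    fun z hz => ?_, fun z hz => (hg.rightInvOn_image (hmaps hz)).symm⟩
  · rw [Function.comp_apply, hk0, hg (mem_ball_self one_pos)]
  · exact Function.invFunOn_mem (hmaps hz)

lemma IsClassA.differentiableOn_mul_deriv_div {f : ℂ → ℂ} (hf : IsClassA f)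
    (hne : ∀ z ∈ 𝔻, z ≠ 0 → f z ≠ 0) :
    DifferentiableOn ℂ (fun z => if z = 0 then 1 else z * deriv f z / f z) 𝔻 := by
  obtain ⟨hd, h0, h1⟩ := hf
  have hslope {z : ℂ} (hz : z ≠ 0) : dslope f 0 z = f z / z := by
    rw [dslope_of_ne _ hz, slope_def_field, h0, sub_zero, sub_zero]
  have hslope0 : ∀ z ∈ 𝔻, dslope f 0 z ≠ 0 := fun z hz => by
    rcases eq_or_ne z 0 with rfl | hz0
    · rw [dslope_same, h1]
      exact one_ne_zero
    · rw [hslope hz0]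
      exact div_ne_zero (hne z hz hz0) hz0
  have hslope_diff := (differentiableOn_dslope (isOpen_𝔻.mem_nhds (mem_ball_self one_pos))).2 hd
  refine ((hd.deriv isOpen_𝔻).div hslope_diff hslope0).congr fun z _ => ?_
  rw [Pi.div_apply]
  split_ifs with hz0
  · rw [hz0, dslope_same, h1, div_one]
  · rw [hslope hz0, div_div_eq_mul_div, mul_comm]

lemma IsClassA.starlikeMM {ψ f : ℂ → ℂ} (hf : IsClassA f) (hψd : DifferentiableOn ℂ ψ 𝔻)
    (hψi : InjOn ψ 𝔻) (hψ0 : ψ 0 = 1) (hne : ∀ z ∈ 𝔻, z ≠ 0 → f z ≠ 0)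
    (hmem : ∀ z ∈ 𝔻, z ≠ 0 → z * deriv f z / f z ∈ ψ '' 𝔻) : StarlikeMM ψ f := by
  refine ⟨hf, hne, subordinate_of_mapsTo_image hψd hψi (hf.differentiableOn_mul_deriv_div hne)
    ((if_pos rfl).trans hψ0.symm) fun z hz => ?_⟩
  show ite _ _ _ ∈ ψ '' 𝔻
  split_ifs with hz0
  · exact ⟨0, mem_ball_self one_pos, hψ0⟩
  · exact hmem z hz hz0

namespace StarlikeMM

variable {ψ f : ℂ → ℂ}

lemma apply_zero (hf : StarlikeMM ψ f) : ψ 0 = 1 := by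
  obtain ⟨-, -, ω, -, hω0, -, hω⟩ := hf
  simpa [hω0] using (hω 0 (mem_ball_self one_pos)).symm

lemma mul_deriv_div_mem (hf : StarlikeMM ψ f) {z : ℂ} (hz : z ∈ 𝔻) (hz0 : z ≠ 0) :
    z * deriv f z / f z ∈ ψ '' 𝔻 := by
  obtain ⟨-, -, ω, -, -, hω𝔻, hω⟩ := hf
  exact ⟨ω z, hω𝔻 z hz, (hω z hz).symm.trans (if_neg hz0)⟩

end StarlikeMM

lemma mul_mem_ball_zero {q z : ℂ} {R : ℝ} (hq : ‖q‖ ≤ 1) (hz : z ∈ ball 0 R) :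
    q * z ∈ ball 0 R := by
  rw [mem_ball_zero_iff] at hz ⊢
  exact (norm_mul_le q z).trans_lt ((mul_le_of_le_one_left (norm_nonneg z) hq).trans_lt hz)

lemma one_sub_ne_zero_of_mem_𝔻 {z : ℂ} (hz : z ∈ 𝔻) : 1 - z ≠ 0 := fun h => by
  rw [← sub_eq_zero.1 h, mem_𝔻, norm_one] at hz
  exact lt_irrefl _ hz

/-- The comparison function `z ↦ H (r z) / r`, where `H z = z / ((1 - q z) (1 - z))`. -/
def rescaledH (q r z : ℂ) : ℂ := r * z / ((1 - q * (r * z)) * (1 - r * z)) / r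

lemma mul_deriv_rescaledH_div {q r z : ℂ} (hr : r ≠ 0) (hz : z ≠ 0) (hrz : r * z ∈ 𝔻)
    (hqrz : q * (r * z) ∈ 𝔻) :
    z * deriv (rescaledH q r) z / rescaledH q r z =
      1 / (1 - r * z) + 1 / (1 - q * (r * z)) - 1 := by
  have hr1 := one_sub_ne_zero_of_mem_𝔻 hrz
  have hq1 := one_sub_ne_zero_of_mem_𝔻 hqrz
  have hid : HasDerivAt (fun z : ℂ => r * z) r z := by
    simpa using (hasDerivAt_id z).const_mul r
  have hden : HasDerivAt (fun z => (1 - q * (r * z)) * (1 - r * z))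
      (-(q * r) * (1 - r * z) + (1 - q * (r * z)) * -r) z :=
    ((hid.const_mul q).const_sub 1).fun_mul (hid.const_sub 1)
  have hH : HasDerivAt (rescaledH q r) _ z :=
    (hid.fun_div hden (mul_ne_zero hq1 hr1)).div_const r
  rw [hH.deriv, rescaledH]
  generalize hE : 1 - q * (r * z) = E at *
  generalize hD : 1 - r * z = D at *
  field_simp
  linear_combination -D * hE - E * hD

/-- The function `z ↦ G (r z) / r`, where `G z = z · d_q f z` for the Jackson derivative `d_q`. -/
def rescaledQDeriv (f : ℂ → ℂ) (q r z : ℂ) : ℂ := (f (r * z) - f (q * (r * z))) / (1 - q) / r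

section RescaledQDeriv

variable {f : ℂ → ℂ} {q r z : ℂ}

lemma hasDerivAt_rescaledQDeriv (hf : DifferentiableOn ℂ f 𝔻) (hr : r ≠ 0) (hrz : r * z ∈ 𝔻)
    (hqrz : q * (r * z) ∈ 𝔻) :
    HasDerivAt (rescaledQDeriv f q r)
      ((deriv f (r * z) - q * deriv f (q * (r * z))) / (1 - q)) z := by
  have hid : HasDerivAt (fun z : ℂ => r * z) r z := by
    simpa using (hasDerivAt_id z).const_mul r
  have hfr := (hf.hasDerivAt (isOpen_𝔻.mem_nhds hrz)).comp z hid
  have hfq := (hf.hasDerivAt (isOpen_𝔻.mem_nhds hqrz)).comp z (hid.const_mul q)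
  refine (((hfr.sub hfq).div_const (1 - q)).div_const r).congr_deriv ?_
  field_simp

lemma IsClassA.rescaledQDeriv (hf : IsClassA f) (hq : ‖q‖ ≤ 1) (hq1 : q ≠ 1) (hr0 : r ≠ 0)
    (hr : ‖r‖ ≤ 1) : IsClassA (rescaledQDeriv f q r) := by
  have hderiv {z : ℂ} (hz : z ∈ 𝔻) := hasDerivAt_rescaledQDeriv (q := q) hf.1 hr0
    (mul_mem_ball_zero hr hz) (mul_mem_ball_zero hq (mul_mem_ball_zero hr hz))
  refine ⟨fun z hz => (hderiv hz).differentiableAt.differentiableWithinAt, ?_, ?_⟩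
  · simp only [_root_.rescaledQDeriv, mul_zero, sub_self, zero_div]
  · rw [(hderiv (mem_ball_self one_pos)).deriv, mul_zero, mul_zero, hf.2.2, mul_one,
      div_self (sub_ne_zero.2 hq1.symm)]

lemma rescaledQDeriv_ne_zero (hq1 : q ≠ 1) (hr : r ≠ 0) (h : f (r * z) ≠ f (q * (r * z))) :
    rescaledQDeriv f q r z ≠ 0 :=
  div_ne_zero (div_ne_zero (sub_ne_zero.2 h) (sub_ne_zero.2 hq1.symm)) hr

lemma mul_deriv_rescaledQDeriv_div (hf : DifferentiableOn ℂ f 𝔻) (hq1 : q ≠ 1) (hr : r ≠ 0)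
    (hrz : r * z ∈ 𝔻) (hqrz : q * (r * z) ∈ 𝔻) :
    z * deriv (rescaledQDeriv f q r) z / rescaledQDeriv f q r z =
      (r * z * deriv f (r * z) - q * (r * z) * deriv f (q * (r * z))) /
        (f (r * z) - f (q * (r * z))) := by
  rw [(hasDerivAt_rescaledQDeriv hf hr hrz hqrz).deriv, rescaledQDeriv]
  have hq1' : 1 - q ≠ 0 := sub_ne_zero.2 hq1.symm
  field_simp

end RescaledQDeriv

lemma one_div_one_sub_div {a c : ℂ} (hc : c ≠ 0) : 1 / (1 - a / c) = c / (c - a) := by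
  rw [one_sub_div hc, one_div_div]

lemma StarlikeMM.div_sub_add_div_sub_sub_one_mem {ψ : ℂ → ℂ} {q r z c : ℂ}
    (hH : StarlikeMM ψ (rescaledH q r)) (hq : ‖q‖ ≤ 1) (hr0 : r ≠ 0) (hr : ‖r‖ ≤ 1) (hz : z ≠ 0)
    (hzc : ‖z‖ < ‖c‖) : c / (c - r * z) + c / (c - q * (r * z)) - 1 ∈ ψ '' 𝔻 := by
  have hc : c ≠ 0 := norm_pos_iff.1 ((norm_nonneg z).trans_lt hzc)
  have hw : z / c ∈ 𝔻 := by
    rw [mem_𝔻, norm_div]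
    exact (div_lt_one (norm_pos_iff.2 hc)).2 hzc
  have hrw : r * (z / c) ∈ 𝔻 := mul_mem_ball_zero hr hw
  have hmem := hH.mul_deriv_div_mem hw (div_ne_zero hz hc)
  rwa [mul_deriv_rescaledH_div hr0 (div_ne_zero hz hc) hrw (mul_mem_ball_zero hq hrw),
    ← mul_div_assoc, ← mul_div_assoc, one_div_one_sub_div hc, one_div_one_sub_div hc] at hmem

lemma IsConvexFn.isConvexMap {f : ℂ → ℂ} (hf : IsConvexFn f) : IsConvexMap f :=
  ⟨hf.1.1, hf.2.1, hf.2.2⟩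

theorem stmt13_general {ψ : ℂ → ℂ} (hψd : DifferentiableOn ℂ ψ 𝔻) (hψi : InjOn ψ 𝔻)
    (hconv : Convex ℝ (ψ '' 𝔻)) {q r : ℂ} (hq : ‖q‖ ≤ 1) (hq1 : q ≠ 1) (hr0 : r ≠ 0)
    (hr : ‖r‖ ≤ 1) (hH : StarlikeMM ψ (rescaledH q r)) {f : ℂ → ℂ} (hf : IsConvexFn f) :
    StarlikeMM ψ (rescaledQDeriv f q r) := by
  have hne {z : ℂ} (hz : z ≠ 0) : r * z ≠ q * (r * z) := fun h =>
    hq1 (mul_right_cancel₀ (mul_ne_zero hr0 hz) (h.symm.trans (one_mul _).symm))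
  have hrz {z : ℂ} (hz : z ∈ 𝔻) : r * z ∈ 𝔻 := mul_mem_ball_zero hr hz
  have hqrz {z : ℂ} (hz : z ∈ 𝔻) : q * (r * z) ∈ 𝔻 := mul_mem_ball_zero hq (hrz hz)
  refine (hf.1.rescaledQDeriv hq hq1 hr0 hr).starlikeMM hψd hψi hH.apply_zero
    (fun z hz hz0 => ?_) fun z hz hz0 => ?_
  · exact rescaledQDeriv_ne_zero hq1 hr0 (hf.isConvexMap.injOn.ne (hrz hz) (hqrz hz) (hne hz0))
  · obtain ⟨R, hzR, hR1⟩ := exists_between (mem_𝔻.1 hz)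
    have hrzR := mul_mem_ball_zero hr (mem_ball_zero_iff.2 hzR)
    rw [mul_deriv_rescaledQDeriv_div hf.1.1 hq1 hr0 (hrz hz) (hqrz hz)]
    refine hf.isConvexMap.mul_deriv_sub_mul_deriv_div_sub_mem
      (isOpen_image_of_injOn isOpen_𝔻 hψd hψi) hconv hR1 hrzR (mul_mem_ball_zero hq hrzR)
      (hne hz0) fun c hc => ?_
    exact hH.div_sub_add_div_sub_sub_one_mem hq hr0 hr hz0
      (hzR.trans_eq (mem_sphere_zero_iff_norm.1 hc).symm)

theorem stmt13 (ψ : ℂ → ℂ) (hψ : MaMinda ψ) (hconv : Convex ℝ (ψ '' 𝔻))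
    (q : ℝ) (hq0 : 0 < q) (hq1 : q < 1)
    (r : ℝ) (hr0 : 0 < r) (hr1 : r ≤ 1)
    (hH : StarlikeMM ψ
      (fun z => (((r:ℂ)*z) / ((1 - (q:ℂ)*((r:ℂ)*z)) * (1 - (r:ℂ)*z))) / (r:ℂ)))
    (f : ℂ → ℂ) (hf : IsConvexFn f) :
    StarlikeMM ψ
      (fun z => ((f ((r:ℂ)*z) - f ((q:ℂ)*((r:ℂ)*z))) / (1 - (q:ℂ))) / (r:ℂ)) := by
  have hq : ‖(q : ℂ)‖ ≤ 1 := (Complex.norm_of_nonneg hq0.le).trans_le hq1.le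
  have hr : ‖(r : ℂ)‖ ≤ 1 := (Complex.norm_of_nonneg hr0.le).trans_le hr1
  exact stmt13_general hψ.1 hψ.2.1 hconv hq (mod_cast hq1.ne) (mod_cast hr0.ne') hr hH hf
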